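/- Let V be the maximum of m jointly Gaussian centered random variables each with variance at most σ̄², where σ̄ > 0 and each variance is at least c > 0. Then there is a constant C depending only on c and σ̄ such that for every ε > 0 and every s ∈ ℝ, P(|V − s| ≤ ε) ≤ C·ε·(1 + (log(m/ε))^{1/2}). -/

import Mathlib

open MeasureTheory ProbabilityTheory Matrix

/-- A random vector is centered Gaussian with covariance matrix `S` if every linear
combination of its coordinates is one-dimensional Gaussian with mean `0` and the
corresponding quadratic-form variance. -/
def IsCenteredGaussianVec {Ω : Type*} [MeasurableSpace Ω] (μ : Measure Ω)
    {ι : Type*} [Fintype ι] (X : Ω → ι → ℝ) (S : Matrix ι ι ℝ) : Prop :=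
  ∀ c : ι → ℝ,
    Measure.map (fun ω => ∑ i, c i * X ω i) μ =
      gaussianReal 0 (∑ i, ∑ j, c i * S i j * c j).toNNReal

/-!
If `X` is Gaussian and all its coordinates have the same variance, then
`cov[X j, X i] ≤ Var[X j]`. So, given the part of `X` independent of `X j`, raising `X j` by some
amount raises every other coordinate by at most that amount, and the event that `j` attains the
maximum is an upper set in `X j`. Over a window of length `d` with `d * (b - m + d) ≤ v`, the
density of a real Gaussian with mean `m` and variance `v` decays by at most a factor `exp 2` near
`b`. Hence an upper set has at most a fraction `exp 2 * ((b - a) / d)` of its mass in `[a, b]`. The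
events "`j` is the first maximiser" are disjoint, so summing over `j` gives a bound without any
dimension factor, linear in the level `s`. Unequal variances are reduced to this case by passing to
`(X i - s) / √Var[X i]`. Finally, levels above `√(2 v log (m / ε))`, where `m` now counts the
coordinates, are reached with probability at most `ε` by the union bound, so the linear dependence
on `s` costs only the factor `1 + √(log (m / ε))`.
-/

section GaussianReal

variable {m a b d : ℝ} {v : NNReal}

theorem gaussianPDF_le_exp_mul_gaussianPDF (hv : v ≠ 0) {x y r : ℝ}
    (h : (y - m) ^ 2 - (x - m) ^ 2 ≤ r * (2 * v)) :
    gaussianPDF m v x ≤ ENNReal.ofReal (Real.exp r) * gaussianPDF m v y := by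
  have hv' : (0 : ℝ) < 2 * v := by positivity
  have hexponent : -(x - m) ^ 2 / (2 * v) ≤ r + -(y - m) ^ 2 / (2 * v) := by
    rw [← sub_le_iff_le_add, ← sub_div, div_le_iff₀ hv']
    linarith
  rw [gaussianPDF, gaussianPDF, ← ENNReal.ofReal_mul (Real.exp_pos r).le, gaussianPDFReal_def,
    mul_left_comm, ← Real.exp_add]
  exact ENNReal.ofReal_le_ofReal (by dsimp only; gcongr)

theorem measure_mul_setLIntegral_le {α : Type*} [MeasurableSpace α] {μ : Measure α}
    {f : α → ENNReal} (hf : Measurable f) {s t : Set α} {K : ENNReal}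
    (h : ∀ x ∈ s, ∀ y ∈ t, f x ≤ K * f y) :
    μ t * ∫⁻ x in s, f x ∂μ ≤ K * μ s * ∫⁻ y in t, f y ∂μ := by
  have hpoint : ∀ y ∈ t, ∫⁻ x in s, f x ∂μ ≤ K * μ s * f y := fun y hy ↦
    calc ∫⁻ x in s, f x ∂μ ≤ ∫⁻ _ in s, K * f y ∂μ :=
          setLIntegral_mono measurable_const fun x hx ↦ h x hx y hy
      _ = K * μ s * f y := by rw [setLIntegral_const, mul_right_comm]
  calc μ t * ∫⁻ x in s, f x ∂μ = ∫⁻ _ in t, (∫⁻ x in s, f x ∂μ) ∂μ := by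
        rw [setLIntegral_const, mul_comm]
    _ ≤ ∫⁻ y in t, K * μ s * f y ∂μ := setLIntegral_mono (hf.const_mul _) hpoint
    _ = K * μ s * ∫⁻ y in t, f y ∂μ := lintegral_const_mul _ hf

theorem ofReal_mul_gaussianReal_Icc_le (hv : v ≠ 0) (hbd : d * (b - m + d) ≤ v)
    (had : b - a ≤ d) :
    ENNReal.ofReal d * gaussianReal m v (Set.Icc a b) ≤
      ENNReal.ofReal (Real.exp 2) * ENNReal.ofReal (b - a) *
        gaussianReal m v (Set.Icc b (b + d)) := by
  have hpdf : ∀ x ∈ Set.Icc a b, ∀ y ∈ Set.Icc b (b + d),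
      gaussianPDF m v x ≤ ENNReal.ofReal (Real.exp 2) * gaussianPDF m v y := by
    rintro x ⟨hax, hxb⟩ y ⟨hby, hyd⟩
    refine gaussianPDF_le_exp_mul_gaussianPDF hv ?_
    have hslope : (y - x) * (b - m + d) ≤ 2 * v := by
      rcases le_total (b - m + d) 0 with hneg | hpos
      · exact (mul_nonpos_of_nonneg_of_nonpos (by linarith) hneg).trans (by positivity)
      · nlinarith
    nlinarith
  have h := measure_mul_setLIntegral_le (μ := volume) (measurable_gaussianPDF m v) hpdf
  rwa [← gaussianReal_apply m hv, ← gaussianReal_apply m hv, Real.volume_Icc, Real.volume_Icc,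
    add_sub_cancel_left] at h

theorem gaussianReal_inter_Icc_le_of_isUpperSet (hv : v ≠ 0) (hd : 0 < d)
    (hbd : d * (b - m + d) ≤ v) {U : Set ℝ} (hU : IsUpperSet U) :
    gaussianReal m v (U ∩ Set.Icc a b) ≤
      ENNReal.ofReal (Real.exp 2 * ((b - a) / d)) * gaussianReal m v U := by
  rcases (U ∩ Set.Icc a b).eq_empty_or_nonempty with hempty | ⟨x, hxU, hx⟩
  · simp [hempty]
  rcases le_total d (b - a) with hda | had
  · refine (measure_mono Set.inter_subset_left).trans (le_mul_of_one_le_left' ?_)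
    rw [ENNReal.one_le_ofReal]
    exact one_le_mul_of_one_le_of_one_le (Real.one_le_exp (by norm_num)) ((one_le_div hd).2 hda)
  have hwindow : Set.Icc b (b + d) ⊆ U := fun y hy ↦ hU (hx.2.trans hy.1) hxU
  have hd' : ENNReal.ofReal d ≠ 0 := (ENNReal.ofReal_pos.2 hd).ne'
  calc gaussianReal m v (U ∩ Set.Icc a b) ≤ gaussianReal m v (Set.Icc a b) :=
        measure_mono Set.inter_subset_right
    _ ≤ ENNReal.ofReal (Real.exp 2) * ENNReal.ofReal (b - a) *
          gaussianReal m v (Set.Icc b (b + d)) / ENNReal.ofReal d := by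
        rw [ENNReal.le_div_iff_mul_le (.inl hd') (.inl ENNReal.ofReal_ne_top), mul_comm]
        exact ofReal_mul_gaussianReal_Icc_le hv hbd had
    _ = ENNReal.ofReal (Real.exp 2 * ((b - a) / d)) * gaussianReal m v (Set.Icc b (b + d)) := by
        rw [ENNReal.ofReal_mul (Real.exp_pos 2).le, ENNReal.ofReal_div_of_pos hd,
          ENNReal.mul_div_right_comm, mul_div_assoc]
    _ ≤ ENNReal.ofReal (Real.exp 2 * ((b - a) / d)) * gaussianReal m v U := by gcongr

end GaussianReal

/-- The index `j` is the first one at which `x` attains its maximum. Choosing the first index makes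
the corresponding events disjoint even when coordinates of a random vector coincide. -/
def IsFirstMax {ι α : Type*} [LT ι] [Preorder α] (x : ι → α) (j : ι) : Prop :=
  ∀ i, x i ≤ x j ∧ (i < j → x i < x j)

namespace IsFirstMax

variable {ι : Type*} [LinearOrder ι] {x y : ι → ℝ} {i j : ι}

theorem iSup_eq (h : IsFirstMax x j) : ⨆ i, x i = x j :=
  IsGreatest.csSup_eq ⟨Set.mem_range_self j, Set.forall_mem_range.2 fun i ↦ (h i).1⟩

theorem unique (hi : IsFirstMax x i) (hj : IsFirstMax x j) : i = j := by
  rcases lt_trichotomy i j with hij | hij | hij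
  · exact absurd (hi j).1 ((hj i).2 hij).not_ge
  · exact hij
  · exact absurd (hj i).1 ((hi j).2 hij).not_ge

theorem of_sub_le_sub (h : IsFirstMax x j) (hxy : ∀ i, y i - x i ≤ y j - x j) :
    IsFirstMax y j := fun i ↦
  ⟨by linarith [(h i).1, hxy i], fun hij ↦ by linarith [(h i).2 hij, hxy i]⟩

end IsFirstMax

theorem exists_isFirstMax {ι : Type*} [LinearOrder ι] [Finite ι] [Nonempty ι] (x : ι → ℝ) :
    ∃ j, IsFirstMax x j := by
  obtain ⟨j, hj⟩ := Finite.exists_max fun i ↦ toLex (x i, OrderDual.toDual i)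
  refine ⟨j, fun i ↦ ?_⟩
  rcases Prod.Lex.toLex_le_toLex.1 (hj i) with hlt | ⟨heq, hle⟩
  · exact ⟨hlt.le, fun _ ↦ hlt⟩
  · exact ⟨heq.le, fun hij ↦ absurd hij (OrderDual.toDual_le_toDual.1 hle).not_gt⟩

theorem measurableSet_isFirstMax {ι : Type*} [LinearOrder ι] [Countable ι] (j : ι) :
    MeasurableSet {x : ι → ℝ | IsFirstMax x j} := by
  simp only [IsFirstMax, Set.ofPred_forall, Set.ofPred_and]
  refine .iInter fun i ↦ (measurableSet_le (by fun_prop) (by fun_prop)).inter ?_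
  exact .iInter fun _ ↦ measurableSet_lt (by fun_prop) (by fun_prop)

section Probability

variable {Ω : Type*} [MeasurableSpace Ω] {μ : Measure Ω}

theorem sum_measure_isFirstMax {ι : Type*} [Fintype ι] [Nonempty ι] [LinearOrder ι]
    [IsProbabilityMeasure μ] {X : Ω → ι → ℝ} (hX : AEMeasurable X μ) :
    ∑ j, μ {ω | IsFirstMax (X ω) j} = 1 := by
  have hdisjoint : Pairwise (Function.onFun (AEDisjoint μ) fun j ↦ {ω | IsFirstMax (X ω) j}) :=
    fun i j hij ↦ (Set.disjoint_left.2 fun _ hi hj ↦ hij (IsFirstMax.unique hi hj)).aedisjoint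
  have hmeas : ∀ j, NullMeasurableSet {ω | IsFirstMax (X ω) j} μ := fun j ↦
    hX.nullMeasurable (measurableSet_isFirstMax j)
  have hcover : ⋃ j, {ω | IsFirstMax (X ω) j} = Set.univ :=
    Set.eq_univ_of_forall fun ω ↦ Set.mem_iUnion.2 (exists_isFirstMax (X ω))
  rw [← tsum_fintype (L := .unconditional ι), ← measure_iUnion₀ hdisjoint hmeas, hcover,
    measure_univ]

theorem covariance_le_half_variance_add_variance [IsFiniteMeasure μ] {Y Z : Ω → ℝ}
    (hY : MemLp Y 2 μ) (hZ : MemLp Z 2 μ) : cov[Y, Z; μ] ≤ (Var[Y; μ] + Var[Z; μ]) / 2 := by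
  have h := variance_nonneg (Y - Z) μ
  rw [variance_sub hY hZ] at h
  linarith

theorem indepFun_eval_sub_mul_eval {ι : Type*} [Finite ι] {X : Ω → ι → ℝ}
    (hX : HasGaussianLaw X μ) (j : ι) {ρ : ι → ℝ}
    (hρ : ∀ i, cov[fun ω ↦ X ω j, fun ω ↦ X ω i; μ] = ρ i * Var[fun ω ↦ X ω j; μ]) :
    IndepFun (fun ω ↦ X ω j) (fun ω i ↦ X ω i - ρ i * X ω j) μ := by
  have := Fintype.ofFinite ι
  have := hX.isProbabilityMeasure
  have hLp : ∀ i, MemLp (fun ω ↦ X ω i) 2 μ := fun i ↦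
    (HasGaussianLaw.eval (X := fun i ω ↦ X ω i) hX i).memLp_two
  let L : (ι → ℝ) →L[ℝ] (Unit → ℝ) × (ι → ℝ) :=
    (ContinuousLinearMap.pi fun _ ↦ ContinuousLinearMap.proj j).prod
      (ContinuousLinearMap.pi fun i ↦
        ContinuousLinearMap.proj i - ρ i • ContinuousLinearMap.proj j)
  have hindep : IndepFun (fun ω (_ : Unit) ↦ X ω j) (fun ω i ↦ X ω i - ρ i * X ω j) μ := by
    have hjoint : HasGaussianLaw
        (fun ω ↦ ((fun _ : Unit ↦ X ω j), fun i ↦ X ω i - ρ i * X ω j)) μ := hX.map_fun L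
    refine HasGaussianLaw.indepFun_of_covariance_eval (X := fun _ ω ↦ X ω j)
      (Y := fun i ω ↦ X ω i - ρ i * X ω j) hjoint fun _ i ↦ ?_
    rw [covariance_fun_sub_right (hLp j) (hLp i) ((hLp j).const_mul _),
      covariance_const_mul_right, covariance_self (hLp j).aemeasurable, hρ, sub_self]
  exact hindep.comp (φ := fun f : Unit → ℝ ↦ f ()) (measurable_pi_apply _) measurable_id

theorem measure_inter_preimage_Icc_le_of_isUpperSet {β : Type*} [MeasurableSpace β]
    [IsFiniteMeasure μ] {Y : Ω → ℝ} {Z : Ω → β} {m a b d : ℝ} {v : NNReal} {T : Set (ℝ × β)}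
    (hY : HasLaw Y (gaussianReal m v) μ) (hZ : AEMeasurable Z μ) (hYZ : IndepFun Y Z μ)
    (hT : MeasurableSet T) (hTup : ∀ z, IsUpperSet {y | (y, z) ∈ T})
    (hv : v ≠ 0) (hd : 0 < d) (hbd : d * (b - m + d) ≤ v) :
    μ ({ω | (Y ω, Z ω) ∈ T} ∩ Y ⁻¹' Set.Icc a b) ≤
      ENNReal.ofReal (Real.exp 2 * ((b - a) / d)) * μ {ω | (Y ω, Z ω) ∈ T} := by
  have hlaw : μ.map (fun ω ↦ (Y ω, Z ω)) = (gaussianReal m v).prod (μ.map Z) := by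
    rw [hYZ.map_prod_eq_prod_map_map hY.aemeasurable hZ, hY.map_eq]
  have hYZm : AEMeasurable (fun ω ↦ (Y ω, Z ω)) μ := hY.aemeasurable.prodMk hZ
  have hTI : MeasurableSet (T ∩ Prod.fst ⁻¹' Set.Icc a b) :=
    hT.inter (measurable_fst measurableSet_Icc)
  calc μ ({ω | (Y ω, Z ω) ∈ T} ∩ Y ⁻¹' Set.Icc a b)
      = ((gaussianReal m v).prod (μ.map Z)) (T ∩ Prod.fst ⁻¹' Set.Icc a b) := by
        rw [← hlaw, Measure.map_apply_of_aemeasurable hYZm hTI]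
        rfl
    _ = ∫⁻ z, gaussianReal m v ({y | (y, z) ∈ T} ∩ Set.Icc a b) ∂(μ.map Z) :=
        Measure.prod_apply_symm hTI
    _ ≤ ∫⁻ z, ENNReal.ofReal (Real.exp 2 * ((b - a) / d)) *
          gaussianReal m v {y | (y, z) ∈ T} ∂(μ.map Z) :=
        lintegral_mono fun z ↦ gaussianReal_inter_Icc_le_of_isUpperSet hv hd hbd (hTup z)
    _ = ENNReal.ofReal (Real.exp 2 * ((b - a) / d)) *
          ((gaussianReal m v).prod (μ.map Z)) T := by
        rw [Measure.prod_apply_symm hT]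
        exact lintegral_const_mul _ (measurable_measure_prodMk_right hT)
    _ = ENNReal.ofReal (Real.exp 2 * ((b - a) / d)) * μ {ω | (Y ω, Z ω) ∈ T} := by
        rw [← hlaw, Measure.map_apply_of_aemeasurable hYZm hT]
        rfl

section LevelBound

variable {ι : Type*} [Finite ι] {X : Ω → ι → ℝ}

theorem measure_isFirstMax_inter_abs_le [LinearOrder ι] (hX : HasGaussianLaw X μ) {v : NNReal}
    (hv : v ≠ 0) (hV : ∀ i, Var[fun ω ↦ X ω i; μ] = v) {η d : ℝ} (hd : 0 < d) (j : ι)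
    (hηd : d * (η - ∫ ω, X ω j ∂μ + d) ≤ v) :
    μ ({ω | IsFirstMax (X ω) j} ∩ {ω | |X ω j| ≤ η}) ≤
      ENNReal.ofReal (Real.exp 2 * (2 * η / d)) * μ {ω | IsFirstMax (X ω) j} := by
  have := hX.isProbabilityMeasure
  have hv' : (0 : ℝ) < v := by positivity
  have hgauss : ∀ i, HasGaussianLaw (fun ω ↦ X ω i) μ :=
    HasGaussianLaw.eval (X := fun i ω ↦ X ω i) hX
  set ρ : ι → ℝ := fun i ↦ cov[fun ω ↦ X ω j, fun ω ↦ X ω i; μ] / v with hρ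
  have hρ_le : ∀ i, ρ i ≤ 1 := fun i ↦ by
    have h := covariance_le_half_variance_add_variance (hgauss j).memLp_two (hgauss i).memLp_two
    rw [hV, hV, add_self_div_two] at h
    exact (div_le_one hv').2 h
  have hρ_self : ρ j = 1 := by
    simp only [hρ, covariance_self (hgauss j).aemeasurable, hV, div_self hv'.ne']
  have hindep := indepFun_eval_sub_mul_eval hX j (ρ := ρ) fun i ↦ by
    rw [hV, div_mul_cancel₀ _ hv'.ne']
  have hlaw : HasLaw (fun ω ↦ X ω j) (gaussianReal (∫ ω, X ω j ∂μ) v) μ :=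
    ⟨(hgauss j).aemeasurable, by rw [(hgauss j).map_eq_gaussianReal, hV, Real.toNNReal_coe]⟩
  have hresidual : AEMeasurable (fun ω i ↦ X ω i - ρ i * X ω j) μ :=
    aemeasurable_pi_lambda _ fun i ↦
      (hgauss i).aemeasurable.sub ((hgauss j).aemeasurable.const_mul _)
  let T : Set (ℝ × (ι → ℝ)) := {p | IsFirstMax (fun i ↦ p.2 i + ρ i * p.1) j}
  have hT : MeasurableSet T :=
    (measurable_pi_lambda _ fun i ↦ by fun_prop) (measurableSet_isFirstMax j)
  have hTup : ∀ z, IsUpperSet {y | (y, z) ∈ T} := fun z y y' hyy' hy ↦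
    IsFirstMax.of_sub_le_sub hy fun i ↦ by
      have := mul_le_mul_of_nonneg_right (hρ_le i) (sub_nonneg.2 hyy')
      simp only [hρ_self]
      linarith
  have h := measure_inter_preimage_Icc_le_of_isUpperSet (a := -η) hlaw hresidual hindep hT hTup
    hv hd hηd
  simpa only [T, Set.mem_ofPred_eq, sub_add_cancel, sub_neg_eq_add, ← two_mul, Set.preimage,
    Set.mem_Icc, ← abs_le] using h

theorem measure_abs_iSup_le [Nonempty ι] (hX : HasGaussianLaw X μ) {v : NNReal} (hv : v ≠ 0)
    (hV : ∀ i, Var[fun ω ↦ X ω i; μ] = v) {η d : ℝ} (hd : 0 < d)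
    (hηd : ∀ i, d * (η - ∫ ω, X ω i ∂μ + d) ≤ v) :
    μ {ω | |⨆ i, X ω i| ≤ η} ≤ ENNReal.ofReal (Real.exp 2 * (2 * η / d)) := by
  have := Fintype.ofFinite ι
  obtain ⟨_, -⟩ := exists_wellFoundedLT ι
  have := hX.isProbabilityMeasure
  have hcover : {ω | |⨆ i, X ω i| ≤ η} ⊆
      ⋃ j, {ω | IsFirstMax (X ω) j} ∩ {ω | |X ω j| ≤ η} := fun ω hω ↦ by
    obtain ⟨j, hj⟩ := exists_isFirstMax (X ω)
    exact Set.mem_iUnion.2 ⟨j, hj, by rwa [Set.mem_ofPred_eq, hj.iSup_eq] at hω⟩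
  calc μ {ω | |⨆ i, X ω i| ≤ η}
      ≤ ∑ j, μ ({ω | IsFirstMax (X ω) j} ∩ {ω | |X ω j| ≤ η}) :=
        (measure_mono hcover).trans (measure_iUnion_fintype_le _ _)
    _ ≤ ∑ j, ENNReal.ofReal (Real.exp 2 * (2 * η / d)) * μ {ω | IsFirstMax (X ω) j} :=
        Finset.sum_le_sum fun j _ ↦ measure_isFirstMax_inter_abs_le hX hv hV hd j (hηd j)
    _ = ENNReal.ofReal (Real.exp 2 * (2 * η / d)) := by
        rw [← Finset.mul_sum, sum_measure_isFirstMax hX.aemeasurable, mul_one]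

theorem hasGaussianLaw_sub_const_div (hX : HasGaussianLaw X μ) (s : ℝ) (w : ι → ℝ) :
    HasGaussianLaw (fun ω i ↦ (X ω i - s) / w i) μ := by
  have := Fintype.ofFinite ι
  let L : (ι → ℝ) →L[ℝ] (ι → ℝ) :=
    ContinuousLinearMap.pi fun i ↦ (w i)⁻¹ • ContinuousLinearMap.proj i
  have hL : HasGaussianLaw (fun ω ↦ L (X ω)) μ := hX.map_fun L
  have := hL.isGaussian_map
  have hshift : HasLaw (fun ω ↦ L (X ω) - fun i ↦ s / w i)
      ((μ.map fun ω ↦ L (X ω)).map fun x ↦ x - fun i ↦ s / w i) μ :=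
    ⟨hL.aemeasurable.sub_const _, (AEMeasurable.map_map_of_aemeasurable
      (measurable_id.sub_const _).aemeasurable hL.aemeasurable).symm⟩
  convert hshift.hasGaussianLaw using 3 with ω i
  simp [L, div_eq_inv_mul, mul_sub]

theorem abs_iSup_div_le [Nonempty ι] {x w : ι → ℝ} {r ε : ℝ} (hr : 0 < r) (hw : ∀ i, r ≤ w i)
    (hx : |⨆ i, x i| ≤ ε) : |⨆ i, x i / w i| ≤ ε / r := by
  have hε : 0 ≤ ε := (abs_nonneg _).trans hx
  have hw' : ∀ i, 0 < w i := fun i ↦ hr.trans_le (hw i)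
  obtain ⟨k, hk⟩ := exists_eq_ciSup_of_finite (f := x)
  rw [abs_le] at hx ⊢
  refine ⟨?_, ciSup_le fun i ↦ ?_⟩
  · calc -(ε / r) ≤ -(ε / w k) := neg_le_neg (div_le_div_of_nonneg_left hε hr (hw k))
      _ ≤ x k / w k := by
          rw [← neg_div, hk]
          exact div_le_div_of_nonneg_right hx.1 (hw' k).le
      _ ≤ ⨆ i, x i / w i := le_ciSup (f := fun i ↦ x i / w i) (Set.finite_range _).bddAbove k
  · exact div_le_div₀ hε ((le_ciSup (Set.finite_range x).bddAbove i).trans hx.2) hr (hw i)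

theorem measureReal_abs_iSup_sub_le [Nonempty ι] (hX : HasGaussianLaw X μ) {c R ε s : ℝ}
    (hc : 0 < c) (hV : ∀ i, c ≤ Var[fun ω ↦ X ω i; μ]) (hR : 0 ≤ R)
    (hs : ∀ i, s - ∫ ω, X ω i ∂μ ≤ R) (hε : 0 ≤ ε) :
    μ.real {ω | |(⨆ i, X ω i) - s| ≤ ε} ≤
      Real.exp 2 * (2 * (ε / √c) * (1 + (R + ε) / √c)) := by
  have := hX.isProbabilityMeasure
  have hgauss : ∀ i, HasGaussianLaw (fun ω ↦ X ω i) μ :=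
    HasGaussianLaw.eval (X := fun i ω ↦ X ω i) hX
  set w : ι → ℝ := fun i ↦ √Var[fun ω ↦ X ω i; μ]
  have hcw : ∀ i, √c ≤ w i := fun i ↦ Real.sqrt_le_sqrt (hV i)
  have hc' : 0 < √c := Real.sqrt_pos.2 hc
  have hvar : ∀ i, Var[fun ω ↦ (X ω i - s) / w i; μ] = (1 : NNReal) := fun i ↦ by
    simp only [div_eq_mul_inv, variance_mul_const,
      variance_sub_const (hgauss i).aemeasurable.aestronglyMeasurable]
    rw [inv_pow, Real.sq_sqrt (hc.le.trans (hV i)), mul_inv_cancel₀ (hc.trans_le (hV i)).ne',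
      NNReal.coe_one]
  have hmean : ∀ i, ε / √c - ∫ ω, (X ω i - s) / w i ∂μ ≤ (R + ε) / √c := fun i ↦ by
    rw [integral_div, integral_sub (hgauss i).integrable (integrable_const s)]
    simp only [integral_const, probReal_univ, one_smul]
    have := div_le_div₀ hR (hs i) hc' (hcw i)
    rw [← neg_sub, neg_div] at this
    rw [add_div]
    linarith
  set B : ℝ := (R + ε) / √c
  have hB : 0 ≤ B := by positivity
  have hstep : ∀ i, (1 + B)⁻¹ * (ε / √c - ∫ ω, (X ω i - s) / w i ∂μ + (1 + B)⁻¹) ≤ (1 : NNReal) :=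
    fun i ↦ by
      rw [inv_mul_le_iff₀ (by positivity), NNReal.coe_one, mul_one, add_comm]
      exact add_le_add (inv_le_one_of_one_le₀ (by linarith)) (hmean i)
  have hevent : {ω | |(⨆ i, X ω i) - s| ≤ ε} ⊆ {ω | |⨆ i, (X ω i - s) / w i| ≤ ε / √c} :=
    fun ω hω ↦ abs_iSup_div_le hc' hcw <| by
      rwa [Set.mem_ofPred_eq, ciSup_sub (Set.finite_range _).bddAbove] at hω
  refine ENNReal.toReal_le_of_le_ofReal (by positivity) ((measure_mono hevent).trans ?_)
  simpa only [div_inv_eq_mul, mul_assoc] using measure_abs_iSup_le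
    (hasGaussianLaw_sub_const_div hX s w) one_ne_zero hvar
    (inv_pos.2 (by positivity : 0 < 1 + B)) hstep

end LevelBound

theorem hasSubgaussianMGF_of_hasGaussianLaw {Y : Ω → ℝ} (hY : HasGaussianLaw Y μ)
    (hmean : ∫ ω, Y ω ∂μ = 0) {v : NNReal} (hv : Var[Y; μ] ≤ v) : HasSubgaussianMGF Y v μ := by
  have hlaw := hY.map_eq_gaussianReal
  rw [hmean] at hlaw
  refine ⟨fun u ↦ ?_, fun u ↦ ?_⟩
  · have hint := integrable_exp_mul_gaussianReal (μ := 0) (v := Var[Y; μ].toNNReal) u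
    rw [← hlaw] at hint
    exact hint.comp_aemeasurable hY.aemeasurable
  · rw [mgf_gaussianReal hlaw, zero_mul, zero_add, Real.coe_toNNReal _ (variance_nonneg Y μ)]
    gcongr

section Tail

variable {ι : Type*} [Fintype ι] [Nonempty ι] {X : Ω → ι → ℝ}

theorem measureReal_le_iSup_le [IsFiniteMeasure μ] {v : NNReal}
    (hX : ∀ i, HasSubgaussianMGF (fun ω ↦ X ω i) v μ) {t : ℝ} (ht : 0 ≤ t) :
    μ.real {ω | t ≤ ⨆ i, X ω i} ≤ Fintype.card ι * Real.exp (-t ^ 2 / (2 * v)) := by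
  calc μ.real {ω | t ≤ ⨆ i, X ω i} ≤ μ.real (⋃ i, {ω | t ≤ X ω i}) := by
        refine measureReal_mono fun ω hω ↦ ?_
        obtain ⟨k, hk⟩ := exists_eq_ciSup_of_finite (f := X ω)
        exact Set.mem_iUnion.2 ⟨k, hω.trans_eq hk.symm⟩
    _ ≤ ∑ i, μ.real {ω | t ≤ X ω i} := measureReal_iUnion_fintype_le _
    _ ≤ ∑ _i : ι, Real.exp (-t ^ 2 / (2 * v)) := Finset.sum_le_sum fun i _ ↦ (hX i).measure_ge_le ht
    _ = Fintype.card ι * Real.exp (-t ^ 2 / (2 * v)) := by simp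

theorem measureReal_sqrt_log_le_iSup_le [IsFiniteMeasure μ] {v : NNReal} (hv : v ≠ 0)
    (hX : ∀ i, HasSubgaussianMGF (fun ω ↦ X ω i) v μ) {ε : ℝ} (hε : 0 < ε)
    (hε_le : ε ≤ Fintype.card ι) :
    μ.real {ω | √(2 * v * Real.log (Fintype.card ι / ε)) ≤ ⨆ i, X ω i} ≤ ε := by
  have hcard : (0 : ℝ) < Fintype.card ι := hε.trans_le hε_le
  have hlog : 0 ≤ Real.log (Fintype.card ι / ε) := Real.log_nonneg ((one_le_div hε).2 hε_le)
  have hv' : (2 * v : ℝ) ≠ 0 := by positivity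
  refine (measureReal_le_iSup_le hX (Real.sqrt_nonneg _)).trans_eq ?_
  rw [Real.sq_sqrt (by positivity), neg_div, mul_div_cancel_left₀ _ hv', Real.exp_neg,
    Real.exp_log (by positivity), inv_div, mul_div_cancel₀ _ hcard.ne']

end Tail

/-- The constant `C` obtained here for the anti-concentration inequality for the maximum of centered
Gaussian variables with variances in `[c, v]`. The summand `1` absorbs the trivial bound for `1 ≤ ε`
and the tail bound for large levels. -/
noncomputable def maxAntiConcentrationConst (c v : ℝ) : ℝ :=
  Real.exp 2 * (2 / √c) * (1 + (2 + √(2 * v)) / √c) + 1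

theorem one_le_maxAntiConcentrationConst (c v : ℝ) : 1 ≤ maxAntiConcentrationConst c v :=
  le_add_of_nonneg_left (by positivity)

theorem le_maxAntiConcentrationConst_mul {c v ε q : ℝ} (hε : 0 ≤ ε) (hq : 0 ≤ q) :
    ε ≤ maxAntiConcentrationConst c v * ε * (1 + q) := by
  have hC := one_le_maxAntiConcentrationConst c v
  calc ε = 1 * ε * 1 := by ring
    _ ≤ maxAntiConcentrationConst c v * ε * (1 + q) := by
        gcongr
        linarith

theorem exp_two_mul_le_maxAntiConcentrationConst_mul {c v ε q : ℝ} (hε : 0 ≤ ε) (hε_one : ε ≤ 1)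
    (hq : 0 ≤ q) :
    Real.exp 2 * (2 * (ε / √c) * (1 + (ε + √(2 * v) * q + ε) / √c)) ≤
      maxAntiConcentrationConst c v * ε * (1 + q) := by
  have hlevel : ε + √(2 * v) * q + ε ≤ (2 + √(2 * v)) * (1 + q) := by
    nlinarith [Real.sqrt_nonneg (2 * v)]
  calc Real.exp 2 * (2 * (ε / √c) * (1 + (ε + √(2 * v) * q + ε) / √c))
      ≤ Real.exp 2 * (2 * (ε / √c) * (1 + q + (2 + √(2 * v)) * (1 + q) / √c)) := by
        gcongr
        linarith
    _ = Real.exp 2 * (2 / √c) * (1 + (2 + √(2 * v)) / √c) * ε * (1 + q) := by ring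
    _ ≤ maxAntiConcentrationConst c v * ε * (1 + q) := by
        gcongr
        exact le_add_of_nonneg_right zero_le_one

section MaxAntiConcentration

variable {ι : Type*} [Fintype ι] [Nonempty ι] {X : Ω → ι → ℝ}

theorem stmt_12_general (hX : HasGaussianLaw X μ)
    (hmean : ∀ i, ∫ ω, X ω i ∂μ = 0) {c : ℝ} {v : NNReal} (hc : 0 < c)
    (hV : ∀ i, c ≤ Var[fun ω ↦ X ω i; μ] ∧ Var[fun ω ↦ X ω i; μ] ≤ v) {ε : ℝ} (hε : 0 < ε) (s : ℝ) :
    μ.real {ω | |(⨆ i, X ω i) - s| ≤ ε} ≤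
      maxAntiConcentrationConst c v * ε * (1 + √(Real.log (Fintype.card ι / ε))) := by
  have := hX.isProbabilityMeasure
  set q : ℝ := √(Real.log (Fintype.card ι / ε))
  have hq : 0 ≤ q := Real.sqrt_nonneg _
  have htrivial := le_maxAntiConcentrationConst_mul (c := c) (v := v) hε.le hq
  rcases le_total 1 ε with hε_one | hε_one
  · exact measureReal_le_one.trans (hε_one.trans htrivial)
  rcases le_or_gt s (ε + √(2 * v) * q) with hs | hs
  · exact (measureReal_abs_iSup_sub_le hX hc (fun i ↦ (hV i).1) (by positivity)
      (fun i ↦ by rwa [hmean, sub_zero]) hε.le).trans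
        (exp_two_mul_le_maxAntiConcentrationConst_mul hε.le hε_one hq)
  have hv : v ≠ 0 := by
    obtain ⟨i⟩ := ‹Nonempty ι›
    exact_mod_cast (hc.trans_le ((hV i).1.trans (hV i).2)).ne'
  have hcard : (1 : ℝ) ≤ Fintype.card ι := by exact_mod_cast Fintype.card_pos (α := ι)
  have hsubgauss : ∀ i, HasSubgaussianMGF (fun ω ↦ X ω i) v μ := fun i ↦
    hasSubgaussianMGF_of_hasGaussianLaw (HasGaussianLaw.eval (X := fun i ω ↦ X ω i) hX i)
      (hmean i) (hV i).2
  refine (measureReal_mono fun ω hω ↦ ?_).trans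
    ((measureReal_sqrt_log_le_iSup_le hv hsubgauss hε (hε_one.trans hcard)).trans htrivial)
  rw [Set.mem_ofPred_eq, abs_le] at hω
  rw [Set.mem_ofPred_eq, Real.sqrt_mul (by positivity)]
  linarith

end MaxAntiConcentration

end Probability

namespace IsCenteredGaussianVec

variable {Ω ι : Type*} [MeasurableSpace Ω] [Fintype ι] {μ : Measure Ω} {G : Ω → ι → ℝ}
  {S : Matrix ι ι ℝ}

theorem hasLaw_eval (h : IsCenteredGaussianVec μ G S) (hG : AEMeasurable G μ) (i : ι) :
    HasLaw (fun ω ↦ G ω i) (gaussianReal 0 (S i i).toNNReal) μ := by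
  classical
  exact ⟨(measurable_pi_apply i).comp_aemeasurable hG,
    by simpa [Pi.single_apply] using h (Pi.single i 1)⟩

theorem hasGaussianLaw (h : IsCenteredGaussianVec μ G S) (hG : AEMeasurable G μ) :
    HasGaussianLaw G μ := by
  classical
  refine ⟨isGaussian_of_map_eq_gaussianReal fun L ↦ ⟨0,
    (∑ i, ∑ j, L (Pi.single i 1) * S i j * L (Pi.single j 1)).toNNReal, ?_⟩⟩
  have hL : L ∘ G = fun ω ↦ ∑ i, L (Pi.single i 1) * G ω i := by
    ext ω
    conv_lhs => rw [Function.comp_apply, pi_eq_sum_univ' (G ω), map_sum]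
    simp only [map_smul, smul_eq_mul, mul_comm]
  rw [AEMeasurable.map_map_of_aemeasurable L.continuous.aemeasurable hG, hL, ← h]

theorem integral_eval (h : IsCenteredGaussianVec μ G S) (hG : AEMeasurable G μ) (i : ι) :
    ∫ ω, G ω i ∂μ = 0 := by
  rw [(h.hasLaw_eval hG i).integral_eq, integral_id_gaussianReal]

theorem variance_eval (h : IsCenteredGaussianVec μ G S) (hG : AEMeasurable G μ) {i : ι}
    (hS : 0 ≤ S i i) : Var[fun ω ↦ G ω i; μ] = S i i := by
  rw [(h.hasLaw_eval hG i).variance_eq, variance_id_gaussianReal, Real.coe_toNNReal _ hS]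

end IsCenteredGaussianVec

theorem stmt_12 (c σbar : ℝ) (hc : 0 < c) (hσbar : 0 < σbar) (hcσ : c ≤ σbar ^ 2) :
    ∃ C : ℝ, 0 < C ∧
      ∀ (Ω : Type) (_ : MeasurableSpace Ω) (μ : Measure Ω), IsProbabilityMeasure μ →
        ∀ (m : ℕ), 0 < m →
          ∀ (G : Ω → Fin m → ℝ), Measurable G →
            ∀ (S : Matrix (Fin m) (Fin m) ℝ), S.PosSemidef →
              IsCenteredGaussianVec μ G S →
              (∀ ℓ, c ≤ S ℓ ℓ ∧ S ℓ ℓ ≤ σbar ^ 2) →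
              ∀ (ε : ℝ), 0 < ε → ∀ s : ℝ,
                (μ {ω | |(⨆ ℓ, G ω ℓ) - s| ≤ ε}).toReal ≤
                  C * ε * (1 + Real.sqrt (Real.log ((m : ℝ) / ε))) := by
  refine ⟨maxAntiConcentrationConst c (σbar ^ 2).toNNReal,
    zero_lt_one.trans_le (one_le_maxAntiConcentrationConst _ _), ?_⟩
  intro Ω _ μ _ m hm G hG S hSpos hGS hS ε hε s
  have : Nonempty (Fin m) := ⟨⟨0, hm⟩⟩
  have hV : ∀ ℓ, c ≤ Var[fun ω ↦ G ω ℓ; μ] ∧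
      Var[fun ω ↦ G ω ℓ; μ] ≤ (σbar ^ 2).toNNReal := fun ℓ ↦ by
    rw [hGS.variance_eval hG.aemeasurable hSpos.diag_nonneg, Real.coe_toNNReal _ (sq_nonneg σbar)]
    exact hS ℓ
  change μ.real _ ≤ _
  simpa only [Fintype.card_fin] using stmt_12_general (hGS.hasGaussianLaw hG.aemeasurable)
    (hGS.integral_eval hG.aemeasurable) hc hV hε s
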